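/- Gauge variation of the lattice Chern–Simons form is exact: Let A be a lattice 1-form on ℤ^D and let λ, N : ℤ^D → ℝ be lattice 0-forms. Set A' = A − dλ − 2π·dN. Then, with the noncommutative wedge product, A' ∧ dA' − A ∧ dA = d( (dλ) ∧ A ) + 2π · d( (dN) ∧ A ); in particular the lattice Chern–Simons form A ∧ dA changes by an exact lattice 3-form under the gauge transformation A ↦ A − dλ − 2π dN. -/

import Mathlib

open scoped BigOperators

/-- A site of the hypercubic lattice `ℤ^D`. -/
abbrev Site (D : ℕ) := Fin D → ℤ

/-- The coefficient function of a lattice form on `ℤ^D`: to each site it assigns a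
real coefficient depending on a sequence of direction indices (a `k`-form only
uses the first `k` indices). -/
abbrev Coeff (D : ℕ) := Site D → (ℕ → Fin D) → ℝ

/-- Shift a site by the `μ`-th standard basis vector `ê_μ`. -/
def shiftSite {D : ℕ} (n : Site D) (μ : Fin D) : Site D :=
  fun ν => n ν + if ν = μ then 1 else 0

/-- Forward difference operator `(Δ_μ f)(n) = f(n + ê_μ) - f(n)`. -/
def fdiff {D : ℕ} (μ : Fin D) (f : Site D → ℝ) (n : Site D) : ℝ :=
  f (shiftSite n μ) - f n

/-- Shift a site by `ê_{μ 0} + ê_{μ 1} + ⋯ + ê_{μ (k-1)}`. -/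
def multiShift {D : ℕ} (k : ℕ) (n : Site D) (μ : ℕ → Fin D) : Site D :=
  fun ν => n ν + ∑ i ∈ Finset.range k, (if ν = μ i then 1 else 0)

/-- Antisymmetrization of a coefficient function over its first `k` indices. -/
noncomputable def alt {D : ℕ} (k : ℕ) (c : Coeff D) : Coeff D :=
  fun n μ => ((k.factorial : ℝ))⁻¹ *
    ∑ σ : Equiv.Perm (Fin k), ((Equiv.Perm.sign σ : ℤ) : ℝ) *
      c n (fun i => if h : i < k then μ ↑(σ ⟨i, h⟩) else μ i)

/-- The lattice exterior derivative of a `k`-form: the antisymmetrization over all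
`k+1` indices of `Δ_μ ω_{μ₁⋯μ_k}(n)`. -/
noncomputable def extd {D : ℕ} (k : ℕ) (ω : Coeff D) : Coeff D :=
  alt (k+1) (fun n μ => fdiff (μ 0) (fun x => ω x (fun i => μ (i+1))) n)

/-- The noncommutative wedge product of a `k`-form and an `l`-form on the lattice:
the antisymmetrization over all `k+l` indices of
`ω_{μ₁⋯μ_k}(n) · θ_{ν₁⋯ν_l}(n + ê_{μ₁} + ⋯ + ê_{μ_k})`. -/
noncomputable def wedge {D : ℕ} (k l : ℕ) (ω θ : Coeff D) : Coeff D :=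
  alt (k+l) (fun n μ => ω n μ * θ (multiShift k n μ) (fun i => μ (i+k)))

/-- Iterated noncommutative wedge power of a 2-form (the empty product is the
constant `1`, a 0-form). -/
noncomputable def wpow {D : ℕ} (F : Coeff D) : ℕ → Coeff D
  | 0 => fun _ _ => 1
  | m+1 => wedge 2 (2*m) F (wpow F m)

/-- Noncommutative wedge product of a list of (degree, form) pairs. -/
noncomputable def wedgeList {D : ℕ} : List (ℕ × Coeff D) → Coeff D
  | [] => fun _ _ => 1
  | (d, ω) :: rest => wedge d ((rest.map Prod.fst).sum) ω (wedgeList rest)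

/-- `ω` is a genuine lattice `k`-form: its coefficient depends only on the first
`k` indices and is totally antisymmetric in them. -/
def IsLatticeForm (D k : ℕ) (ω : Coeff D) : Prop :=
  (∀ (n : Site D) (μ ν : ℕ → Fin D), (∀ i < k, μ i = ν i) → ω n μ = ω n ν) ∧
  (∀ (n : Site D) (μ : ℕ → Fin D) (σ : Equiv.Perm (Fin k)),
    ω n (fun i => if h : i < k then μ ↑(σ ⟨i, h⟩) else μ i)
      = ((Equiv.Perm.sign σ : ℤ) : ℝ) * ω n μ)

/-- Extend a tuple `m : Fin j → ℕ` to `ℕ → ℕ` by zero. -/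
def mext {j : ℕ} (m : Fin j → ℕ) : ℕ → ℕ :=
  fun i => if h : i < j then m ⟨i, h⟩ else 0

/-- The curvature 2-form `F = dA` of a lattice 1-form `A`. -/
noncomputable def curv {D : ℕ} (A : Coeff D) : Coeff D := extd 1 A

/-- The standard descent product
`F_0^{m_0} ∧ η^{1,0} ∧ F_1^{m_1} ∧ η^{2,1} ∧ ⋯ ∧ η^{k,k-1} ∧ F_k^{m_k}`,
with `F_i = dA_i` and `η^{i,i-1} = A_i - A_{i-1}`, as a list of (degree, form) pairs. -/
noncomputable def descentList {D : ℕ} (k : ℕ) (A : ℕ → Coeff D) (m : ℕ → ℕ) : List (ℕ × Coeff D) :=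
  (2 * m 0, wpow (curv (A 0)) (m 0)) ::
    (List.range k).flatMap (fun i =>
      [(1, A (i+1) - A i), (2 * m (i+1), wpow (curv (A (i+1))) (m (i+1)))])

/-- The Chern–Simons type characteristic class `Q_r^{(k)}(A_0,…,A_k)` on the lattice:
the sum over compositions `m_0 + ⋯ + m_k = r - k` of the descent products. -/
noncomputable def Qpoly {D : ℕ} (r k : ℕ) (A : ℕ → Coeff D) : Coeff D :=
  ∑ m ∈ Finset.Nat.antidiagonalTuple (k+1) (r - k), wedgeList (descentList k A (mext m))

/-!
The gauge parameters combine into the single `0`-form `Λ = λ + 2π N`, so `A' = A - dΛ` and `d² = 0`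
gives `dA' = dA`. Hence `A' ∧ dA' - A ∧ dA = -dΛ ∧ dA`, and the graded Leibniz rule, with `d² = 0`
again, turns this into `d (dΛ ∧ A)`.

Evaluating the right factor of `∧` at the shifted site makes the Leibniz rule exact: it is
`Δ (f g) n = Δf n * g (n + ê) + f n * Δg n`, antisymmetrized. Both identities are first read off
before antisymmetrization; antisymmetrizing a block of indices is absorbed by antisymmetrizing all
of them.
-/

section IndexPermutations

variable {k m p : ℕ}

/-- A permutation of `Fin k` as a permutation of `ℕ` fixing every `i ≥ k`. These act on the index
sequences of a `Coeff`. -/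
def natPerm (k : ℕ) : Equiv.Perm (Fin k) →* Equiv.Perm ℕ :=
  Equiv.Perm.extendDomainHom Fin.equivSubtype

lemma natPerm_apply_coe (σ : Equiv.Perm (Fin k)) (i : Fin k) : natPerm k σ i = σ i :=
  Equiv.Perm.extendDomain_apply_image σ Fin.equivSubtype i

lemma natPerm_apply_of_lt (σ : Equiv.Perm (Fin k)) {i : ℕ} (hi : i < k) :
    natPerm k σ i = σ ⟨i, hi⟩ :=
  natPerm_apply_coe σ ⟨i, hi⟩

lemma natPerm_apply_of_le (σ : Equiv.Perm (Fin k)) {i : ℕ} (hi : k ≤ i) : natPerm k σ i = i :=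
  Equiv.Perm.extendDomain_apply_not_subtype σ Fin.equivSubtype hi.not_gt

lemma natPerm_lt (σ : Equiv.Perm (Fin k)) {i : ℕ} (hi : i < k) : natPerm k σ i < k := by
  rw [natPerm_apply_of_lt σ hi]
  exact (σ ⟨i, hi⟩).isLt

/-- The permutation of `Fin m` acting as `σ` on the block `p, …, p + k - 1` and trivially
elsewhere. -/
def blockPerm (h : k + p ≤ m) (σ : Equiv.Perm (Fin k)) : Equiv.Perm (Fin m) :=
  σ.viaFintypeEmbedding ((Fin.addNatEmb p).trans (Fin.castLEEmb h))

lemma sign_blockPerm (h : k + p ≤ m) (σ : Equiv.Perm (Fin k)) :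
    Equiv.Perm.sign (blockPerm h σ) = Equiv.Perm.sign σ :=
  Equiv.Perm.viaFintypeEmbedding_sign σ _

lemma natPerm_blockPerm_of_lt (h : k + p ≤ m) (σ : Equiv.Perm (Fin k)) {i : ℕ} (hi : i < p) :
    natPerm m (blockPerm h σ) i = i := by
  by_cases him : i < m
  · rw [natPerm_apply_of_lt _ him, blockPerm, Equiv.Perm.viaFintypeEmbedding_apply_notMem_range]
    rintro ⟨j, hj⟩
    have : (j : ℕ) + p = i := congrArg Fin.val hj
    omega
  · exact natPerm_apply_of_le _ (not_lt.mp him)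

lemma natPerm_blockPerm_add (h : k + p ≤ m) (σ : Equiv.Perm (Fin k)) (i : ℕ) :
    natPerm m (blockPerm h σ) (i + p) = natPerm k σ i + p := by
  by_cases hik : i < k
  · rw [natPerm_apply_of_lt σ hik, natPerm_apply_of_lt _ (by omega : i + p < m)]
    exact congrArg Fin.val (Equiv.Perm.viaFintypeEmbedding_apply_image σ
      ((Fin.addNatEmb p).trans (Fin.castLEEmb h)) ⟨i, hik⟩)
  · rw [natPerm_apply_of_le σ (not_lt.mp hik)]
    by_cases him : i + p < m
    · rw [natPerm_apply_of_lt _ him, blockPerm, Equiv.Perm.viaFintypeEmbedding_apply_notMem_range]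
      rintro ⟨j, hj⟩
      have : (j : ℕ) + p = i + p := congrArg Fin.val hj
      omega
    · exact natPerm_apply_of_le _ (not_lt.mp him)

lemma natPerm_blockPerm_zero (h : k + 0 ≤ m) (σ : Equiv.Perm (Fin k)) :
    natPerm m (blockPerm h σ) = natPerm k σ :=
  Equiv.ext (natPerm_blockPerm_add h σ)

lemma natPerm_swap (a b : Fin k) :
    natPerm k (Equiv.swap a b) = Equiv.swap (a : ℕ) b := by
  ext i
  by_cases hi : i < k
  · rw [natPerm_apply_of_lt _ hi]
    exact (Fin.val_injective.swap_apply a b ⟨i, hi⟩).symm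
  · rw [natPerm_apply_of_le _ (not_lt.mp hi), Equiv.swap_apply_of_ne_of_ne (by omega) (by omega)]

lemma natPerm_finRotate_of_lt {i : ℕ} (hi : i < k) :
    natPerm (k + 1) (finRotate (k + 1)) i = i + 1 := by
  rw [natPerm_apply_of_lt _ (hi.trans k.lt_succ_self), finRotate_of_lt hi]

lemma natPerm_finRotate_self : natPerm (k + 1) (finRotate (k + 1)) k = 0 := by
  rw [natPerm_apply_of_lt _ k.lt_succ_self, finRotate_last', Fin.val_mk]

end IndexPermutations

section Antisymmetrization

variable {D k m p : ℕ}

/-- The action of permutations of the index positions on coefficient functions. -/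
def reindex (e : Equiv.Perm ℕ) : Coeff D →ₗ[ℝ] Coeff D where
  toFun c := fun n μ => c n (μ ∘ e)
  map_add' _ _ := rfl
  map_smul' _ _ := rfl

lemma reindex_apply (e : Equiv.Perm ℕ) (c : Coeff D) (n : Site D) (μ : ℕ → Fin D) :
    reindex e c n μ = c n (μ ∘ e) :=
  rfl

lemma reindex_reindex (e e' : Equiv.Perm ℕ) (c : Coeff D) :
    reindex e (reindex e' c) = reindex (e * e') c :=
  rfl

/-- Antisymmetrization `alt k` as a linear map. -/
noncomputable def altₗ (k : ℕ) : Coeff D →ₗ[ℝ] Coeff D :=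
  (k.factorial : ℝ)⁻¹ •
    ∑ σ : Equiv.Perm (Fin k), ((Equiv.Perm.sign σ : ℤ) : ℝ) • reindex (natPerm k σ)

lemma altₗ_eq_sum (c : Coeff D) :
    altₗ k c = (k.factorial : ℝ)⁻¹ •
      ∑ σ : Equiv.Perm (Fin k), ((Equiv.Perm.sign σ : ℤ) : ℝ) • reindex (natPerm k σ) c := by
  simp only [altₗ, LinearMap.smul_apply, LinearMap.sum_apply]

lemma alt_eq_altₗ (c : Coeff D) : alt k c = altₗ k c := by
  have hperm (σ : Equiv.Perm (Fin k)) (μ : ℕ → Fin D) :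
      (fun i => if h : i < k then μ ↑(σ ⟨i, h⟩) else μ i) = μ ∘ natPerm k σ := by
    funext i
    split_ifs with hi
    · rw [Function.comp_apply, natPerm_apply_of_lt σ hi]
    · rw [Function.comp_apply, natPerm_apply_of_le σ (not_lt.mp hi)]
  funext n μ
  simp only [alt, hperm, altₗ_eq_sum, Pi.smul_apply, Finset.sum_apply, smul_eq_mul, reindex_apply]

lemma sign_mul_sign_self (σ : Equiv.Perm (Fin k)) :
    ((Equiv.Perm.sign σ : ℤ) : ℝ) * (Equiv.Perm.sign σ : ℤ) = 1 := by
  rw [← Int.cast_mul, ← Units.val_mul, Int.units_mul_self, Units.val_one, Int.cast_one]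

lemma altₗ_reindex (τ : Equiv.Perm (Fin k)) (c : Coeff D) :
    altₗ k (reindex (natPerm k τ) c) = ((Equiv.Perm.sign τ : ℤ) : ℝ) • altₗ k c := by
  have hsign (σ : Equiv.Perm (Fin k)) : ((Equiv.Perm.sign σ : ℤ) : ℝ) =
      (Equiv.Perm.sign τ : ℤ) * (Equiv.Perm.sign (σ * τ) : ℤ) := by
    rw [Equiv.Perm.sign_mul, mul_comm (Equiv.Perm.sign σ), Units.val_mul, Int.cast_mul,
      ← mul_assoc, sign_mul_sign_self, one_mul]
  have hterm (σ : Equiv.Perm (Fin k)) :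
      ((Equiv.Perm.sign σ : ℤ) : ℝ) • reindex (natPerm k σ) (reindex (natPerm k τ) c) =
        ((Equiv.Perm.sign τ : ℤ) : ℝ) •
          ((Equiv.Perm.sign (σ * τ) : ℤ) : ℝ) • reindex (natPerm k (σ * τ)) c := by
    rw [reindex_reindex, ← map_mul, smul_smul, ← hsign]
  simp only [altₗ_eq_sum, hterm]
  rw [← Finset.smul_sum, smul_comm]
  congr 2
  exact Equiv.sum_comp (Equiv.mulRight τ) fun σ =>
    ((Equiv.Perm.sign σ : ℤ) : ℝ) • reindex (natPerm k σ) c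

/-- Each permutation of the block contributes its sign twice, once from `altₗ k` and once from
reindexing under `altₗ m`. -/
lemma altₗ_map_altₗ (h : k + p ≤ m) (T : Coeff D →ₗ[ℝ] Coeff D) (c : Coeff D)
    (hT : ∀ σ, T (reindex (natPerm k σ) c) = reindex (natPerm m (blockPerm h σ)) (T c)) :
    altₗ m (T (altₗ k c)) = altₗ m (T c) := by
  have hterm (σ : Equiv.Perm (Fin k)) :
      ((Equiv.Perm.sign σ : ℤ) : ℝ) • altₗ m (T (reindex (natPerm k σ) c)) = altₗ m (T c) := by
    rw [hT, altₗ_reindex, sign_blockPerm, smul_smul, sign_mul_sign_self, one_smul]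
  rw [altₗ_eq_sum c]
  simp only [map_smul, map_sum, hterm, Finset.sum_const, Finset.card_univ, Fintype.card_perm,
    Fintype.card_fin]
  rw [← Nat.cast_smul_eq_nsmul ℝ, inv_smul_smul₀ (Nat.cast_ne_zero.mpr k.factorial_ne_zero)]

lemma dependsOn_altₗ {c : Coeff D} (hc : ∀ n, DependsOn (c n) (Set.Iio k)) (n : Site D) :
    DependsOn (altₗ k c n) (Set.Iio k) := by
  intro μ ν hμν
  have hreindex (σ : Equiv.Perm (Fin k)) :
      reindex (natPerm k σ) c n μ = reindex (natPerm k σ) c n ν :=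
    hc n fun i hi => hμν _ (natPerm_lt σ hi)
  simp only [altₗ_eq_sum, Pi.smul_apply, Finset.sum_apply, hreindex]

end Antisymmetrization

section Shifts

variable {D : ℕ}

lemma shiftSite_comm (n : Site D) (a b : Fin D) :
    shiftSite (shiftSite n a) b = shiftSite (shiftSite n b) a :=
  funext fun _ => add_right_comm _ _ _

lemma multiShift_shiftSite (k : ℕ) (n : Site D) (a : Fin D) (μ : ℕ → Fin D) :
    multiShift k (shiftSite n a) μ = shiftSite (multiShift k n μ) a :=
  funext fun _ => add_right_comm _ _ _

lemma multiShift_succ (k : ℕ) (n : Site D) (μ : ℕ → Fin D) :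
    multiShift (k + 1) n μ = shiftSite (multiShift k n fun i => μ (i + 1)) (μ 0) := by
  funext ν
  simp only [multiShift, shiftSite, Finset.sum_range_succ', add_assoc]

lemma multiShift_congr {k : ℕ} {μ ν : ℕ → Fin D} (h : ∀ i < k, μ i = ν i) (n : Site D) :
    multiShift k n μ = multiShift k n ν := by
  funext a
  refine congrArg (n a + ·) (Finset.sum_congr rfl fun i hi => ?_)
  rw [h i (Finset.mem_range.mp hi)]

lemma multiShift_comp_natPerm {k : ℕ} (n : Site D) (μ : ℕ → Fin D) (σ : Equiv.Perm (Fin k)) :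
    multiShift k n (μ ∘ natPerm k σ) = multiShift k n μ := by
  funext a
  simp only [multiShift, Finset.sum_range, Function.comp_apply, natPerm_apply_coe]
  rw [Equiv.sum_comp σ fun i : Fin k => if a = μ i then (1 : ℤ) else 0]

lemma fdiff_mul (a : Fin D) (f g : Site D → ℝ) (n : Site D) :
    fdiff a (fun x => f x * g x) n = fdiff a f n * g (shiftSite n a) + f n * fdiff a g n := by
  simp only [fdiff]
  ring

lemma fdiff_comm (a b : Fin D) (f : Site D → ℝ) (n : Site D) :
    fdiff a (fdiff b f) n = fdiff b (fdiff a f) n := by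
  simp only [fdiff, shiftSite_comm n a b]
  ring

end Shifts

section RawOperations

variable {D : ℕ}

/-- The exterior derivative before antisymmetrization, `Δ_{μ₀} ω_{μ₁⋯}(n)`. -/
def rawExtd : Coeff D →ₗ[ℝ] Coeff D where
  toFun ω := fun n μ => fdiff (μ 0) (fun x => ω x fun i => μ (i + 1)) n
  map_add' _ _ := by
    funext n μ
    simp only [fdiff, Pi.add_apply]
    ring
  map_smul' _ _ := by
    funext n μ
    simp only [fdiff, Pi.smul_apply, smul_eq_mul, RingHom.id_apply]
    ring

/-- The noncommutative wedge product before antisymmetrization, the left factor being of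
degree `k`. -/
def rawWedge (k : ℕ) : Coeff D →ₗ[ℝ] Coeff D →ₗ[ℝ] Coeff D :=
  LinearMap.mk₂ ℝ (fun ω θ n μ => ω n μ * θ (multiShift k n μ) fun i => μ (i + k))
    (fun _ _ _ => funext₂ fun _ _ => add_mul _ _ _)
    (fun _ _ _ => funext₂ fun _ _ => mul_assoc _ _ _)
    (fun _ _ _ => funext₂ fun _ _ => mul_add _ _ _)
    (fun _ _ _ => funext₂ fun _ _ => mul_left_comm _ _ _)

lemma rawExtd_apply (ω : Coeff D) (n : Site D) (μ : ℕ → Fin D) :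
    rawExtd ω n μ = fdiff (μ 0) (fun x => ω x fun i => μ (i + 1)) n :=
  rfl

lemma rawWedge_apply (k : ℕ) (ω θ : Coeff D) (n : Site D) (μ : ℕ → Fin D) :
    rawWedge k ω θ n μ = ω n μ * θ (multiShift k n μ) fun i => μ (i + k) :=
  rfl

lemma extd_eq_altₗ (k : ℕ) (ω : Coeff D) : extd k ω = altₗ (k + 1) (rawExtd ω) :=
  alt_eq_altₗ _

lemma wedge_eq_altₗ (k l : ℕ) (ω θ : Coeff D) :
    wedge k l ω θ = altₗ (k + l) (rawWedge k ω θ) :=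
  alt_eq_altₗ _

lemma altₗ_rawExtd_altₗ (k : ℕ) (c : Coeff D) :
    altₗ (k + 1) (rawExtd (altₗ k c)) = altₗ (k + 1) (rawExtd c) := by
  refine altₗ_map_altₗ le_rfl rawExtd c fun σ => ?_
  funext n μ
  simp only [reindex_apply, rawExtd_apply, Function.comp_def, natPerm_blockPerm_add,
    natPerm_blockPerm_of_lt _ _ zero_lt_one]

lemma altₗ_rawWedge_altₗ_left (k l : ℕ) (c θ : Coeff D) :
    altₗ (k + l) (rawWedge k (altₗ k c) θ) = altₗ (k + l) (rawWedge k c θ) := by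
  refine altₗ_map_altₗ (p := 0) (k.le_add_right l) ((rawWedge k).flip θ) c fun σ => ?_
  funext n μ
  have htail : (fun i => (μ ∘ natPerm k σ) (i + k)) = fun i => μ (i + k) := by
    funext i
    rw [Function.comp_apply, natPerm_apply_of_le σ (Nat.le_add_left k i)]
  simp only [LinearMap.flip_apply, natPerm_blockPerm_zero, reindex_apply, rawWedge_apply,
    multiShift_comp_natPerm, htail]

lemma altₗ_rawWedge_altₗ_right {k : ℕ} (l : ℕ) {ω : Coeff D}
    (hω : ∀ n, DependsOn (ω n) (Set.Iio k)) (c : Coeff D) :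
    altₗ (k + l) (rawWedge k ω (altₗ l c)) = altₗ (k + l) (rawWedge k ω c) := by
  refine altₗ_map_altₗ (p := k) (add_comm l k).le (rawWedge k ω) c fun σ => ?_
  funext n μ
  set μ' := μ ∘ natPerm (k + l) (blockPerm (add_comm l k).le σ) with hμ'
  have hhead : ∀ i < k, μ i = μ' i := fun i hi => by
    rw [hμ', Function.comp_apply, natPerm_blockPerm_of_lt _ σ hi]
  have htail : (fun i => μ' (i + k)) = (fun i => μ (i + k)) ∘ natPerm l σ := by
    funext i
    simp only [hμ', Function.comp_apply, natPerm_blockPerm_add]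
  rw [reindex_apply, ← hμ', rawWedge_apply, rawWedge_apply, reindex_apply, hω n hhead,
    multiShift_congr hhead, htail]

lemma reindex_swap_rawExtd_rawExtd (k : ℕ) (ω : Coeff D) :
    reindex (natPerm (k + 2) (Equiv.swap 0 1)) (rawExtd (rawExtd ω)) = rawExtd (rawExtd ω) := by
  funext n μ
  rw [reindex_apply, natPerm_swap, Fin.val_zero, Fin.val_one]
  set μ' := μ ∘ Equiv.swap 0 1 with hμ'
  have hzero : μ' 0 = μ 1 := by rw [hμ', Function.comp_apply, Equiv.swap_apply_left]
  have hone : μ' 1 = μ 0 := by rw [hμ', Function.comp_apply, Equiv.swap_apply_right]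
  have htail (i : ℕ) : μ' (i + 1 + 1) = μ (i + 1 + 1) := by
    rw [hμ', Function.comp_apply, Equiv.swap_apply_of_ne_of_ne (by omega) (by omega)]
  simp only [rawExtd_apply, zero_add, hzero, hone, htail]
  exact fdiff_comm _ _ _ _

/-- The rotation moves the index of the difference past the `k` indices of `ω`; its sign is the one
in the Leibniz rule. -/
lemma rawExtd_rawWedge {k : ℕ} {ω : Coeff D} (hω : ∀ n, DependsOn (ω n) (Set.Iio k))
    (θ : Coeff D) :
    rawExtd (rawWedge k ω θ) = rawWedge (k + 1) (rawExtd ω) θ +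
      reindex (natPerm (k + 1) (finRotate (k + 1))) (rawWedge k ω (rawExtd θ)) := by
  funext n μ
  set μ' := μ ∘ natPerm (k + 1) (finRotate (k + 1)) with hμ'
  have hhead : ∀ i < k, μ' i = μ (i + 1) := fun i hi => by
    rw [hμ', Function.comp_apply, natPerm_finRotate_of_lt hi]
  have hmid : μ' k = μ 0 := by
    rw [hμ', Function.comp_apply, natPerm_finRotate_self]
  have htail (i : ℕ) : μ' (i + 1 + k) = μ (i + 1 + k) := by
    rw [hμ', Function.comp_apply, natPerm_apply_of_le _ (by omega)]
  have hω' : ω n μ' = ω n fun i => μ (i + 1) := hω n hhead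
  have hshift : multiShift k n μ' = multiShift k n fun i => μ (i + 1) := multiShift_congr hhead n
  simp only [Pi.add_apply, reindex_apply, ← hμ', rawWedge_apply, rawExtd_apply, fdiff_mul, hω',
    hshift, multiShift_succ, zero_add, hmid, htail]
  simp only [fdiff, multiShift_shiftSite, add_assoc, add_comm 1 k, add_left_comm]

lemma dependsOn_rawExtd {k : ℕ} {ω : Coeff D} (hω : ∀ n, DependsOn (ω n) (Set.Iio k))
    (n : Site D) : DependsOn (rawExtd ω n) (Set.Iio (k + 1)) := by
  intro μ ν hμν
  have htail (x : Site D) : (ω x fun i => μ (i + 1)) = ω x fun i => ν (i + 1) :=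
    hω x fun i hi => hμν (i + 1) (Nat.succ_lt_succ hi)
  simp only [rawExtd_apply, hμν 0 k.succ_pos, htail]

end RawOperations

section ExteriorAlgebra

variable {D : ℕ}

lemma extd_add (k : ℕ) (ω θ : Coeff D) : extd k (ω + θ) = extd k ω + extd k θ := by
  simp only [extd_eq_altₗ, map_add]

lemma extd_sub (k : ℕ) (ω θ : Coeff D) : extd k (ω - θ) = extd k ω - extd k θ := by
  simp only [extd_eq_altₗ, map_sub]

lemma extd_smul (k : ℕ) (a : ℝ) (ω : Coeff D) : extd k (a • ω) = a • extd k ω := by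
  simp only [extd_eq_altₗ, map_smul]

lemma zero_wedge (k l : ℕ) (θ : Coeff D) : wedge k l 0 θ = 0 := by
  simp only [wedge_eq_altₗ, map_zero, LinearMap.zero_apply]

lemma add_wedge (k l : ℕ) (ω ω' θ : Coeff D) :
    wedge k l (ω + ω') θ = wedge k l ω θ + wedge k l ω' θ := by
  simp only [wedge_eq_altₗ, map_add, LinearMap.add_apply]

lemma sub_wedge (k l : ℕ) (ω ω' θ : Coeff D) :
    wedge k l (ω - ω') θ = wedge k l ω θ - wedge k l ω' θ := by
  simp only [wedge_eq_altₗ, map_sub, LinearMap.sub_apply]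

lemma smul_wedge (k l : ℕ) (a : ℝ) (ω θ : Coeff D) :
    wedge k l (a • ω) θ = a • wedge k l ω θ := by
  simp only [wedge_eq_altₗ, map_smul, LinearMap.smul_apply]

lemma dependsOn_extd {k : ℕ} {ω : Coeff D} (hω : ∀ n, DependsOn (ω n) (Set.Iio k))
    (n : Site D) : DependsOn (extd k ω n) (Set.Iio (k + 1)) := by
  rw [extd_eq_altₗ]
  exact dependsOn_altₗ (dependsOn_rawExtd hω) n

theorem extd_extd (k : ℕ) (ω : Coeff D) : extd (k + 1) (extd k ω) = 0 := by
  have hneg : altₗ (k + 2) (rawExtd (rawExtd ω)) = -altₗ (k + 2) (rawExtd (rawExtd ω)) := by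
    conv_lhs => rw [← reindex_swap_rawExtd_rawExtd k]
    rw [altₗ_reindex, Equiv.Perm.sign_swap (by simp), Units.val_neg, Units.val_one, Int.cast_neg,
      Int.cast_one, neg_one_smul]
  rw [extd_eq_altₗ, extd_eq_altₗ, altₗ_rawExtd_altₗ]
  exact self_eq_neg.mp hneg

theorem extd_wedge {k : ℕ} (l : ℕ) {ω : Coeff D} (hω : ∀ n, DependsOn (ω n) (Set.Iio k))
    (θ : Coeff D) :
    extd (k + l) (wedge k l ω θ) =
      wedge (k + 1) l (extd k ω) θ + (-1 : ℝ) ^ k • wedge k (l + 1) ω (extd l θ) := by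
  have hle : k + 1 + 0 ≤ k + l + 1 := by omega
  calc extd (k + l) (wedge k l ω θ)
    _ = altₗ (k + l + 1) (rawExtd (rawWedge k ω θ)) := by
      rw [extd_eq_altₗ, wedge_eq_altₗ k l, altₗ_rawExtd_altₗ (k + l)]
    _ = altₗ (k + l + 1) (rawWedge (k + 1) (rawExtd ω) θ) +
          (-1 : ℝ) ^ k • altₗ (k + l + 1) (rawWedge k ω (rawExtd θ)) := by
      rw [rawExtd_rawWedge hω, map_add, ← natPerm_blockPerm_zero hle, altₗ_reindex,
        sign_blockPerm, sign_finRotate, Units.val_pow_eq_pow_val, Units.val_neg, Units.val_one,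
        Int.cast_pow, Int.cast_neg, Int.cast_one, Nat.add_sub_cancel]
    _ = wedge (k + 1) l (extd k ω) θ + (-1 : ℝ) ^ k • wedge k (l + 1) ω (extd l θ) := by
      rw [wedge_eq_altₗ, wedge_eq_altₗ, extd_eq_altₗ, extd_eq_altₗ, altₗ_rawWedge_altₗ_left,
        altₗ_rawWedge_altₗ_right (l + 1) hω, Nat.add_right_comm k 1 l, add_assoc k l 1]

end ExteriorAlgebra

theorem chern_simons_gauge_variation_general {D k : ℕ} (A : Coeff D) {Λ : Coeff D}
    (hΛ : ∀ n, DependsOn (Λ n) (Set.Iio k)) :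
    wedge (k + 1) (k + 2) (A - extd k Λ) (extd (k + 1) (A - extd k Λ)) -
        wedge (k + 1) (k + 2) A (extd (k + 1) A) =
      (-1 : ℝ) ^ k • extd (k + 1 + (k + 1)) (wedge (k + 1) (k + 1) (extd k Λ) A) := by
  have hcurv : extd (k + 1) (A - extd k Λ) = extd (k + 1) A := by
    rw [extd_sub, extd_extd, sub_zero]
  have hexact : extd (k + 1 + (k + 1)) (wedge (k + 1) (k + 1) (extd k Λ) A) =
      (-1 : ℝ) ^ (k + 1) • wedge (k + 1) (k + 2) (extd k Λ) (extd (k + 1) A) := by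
    rw [extd_wedge (k + 1) (dependsOn_extd hΛ), extd_extd, zero_wedge, zero_add]
  rw [hcurv, sub_wedge, sub_sub_cancel_left, hexact, smul_smul, ← pow_add,
    Odd.neg_one_pow ⟨k, by ring⟩, neg_one_smul]

/-- **Gauge variation of the lattice Chern–Simons form is exact.** For a lattice
1-form `A` on `ℤ^D` and lattice 0-forms `λ, N : ℤ^D → ℝ`, with
`A' = A − dλ − 2π·dN`, one has
`A' ∧ dA' − A ∧ dA = d((dλ) ∧ A) + 2π · d((dN) ∧ A)`. -/
theorem chern_simons_gauge_variation (D : ℕ) (A : Coeff D) (hA : IsLatticeForm D 1 A)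
    (lam N : Site D → ℝ) :
    wedge 1 2
        (A - extd 0 ((fun n _ => lam n) : Coeff D)
           - (2 * Real.pi) • extd 0 ((fun n _ => N n) : Coeff D))
        (extd 1
          (A - extd 0 ((fun n _ => lam n) : Coeff D)
             - (2 * Real.pi) • extd 0 ((fun n _ => N n) : Coeff D)))
      - wedge 1 2 A (extd 1 A)
      = extd 2 (wedge 1 1 (extd 0 ((fun n _ => lam n) : Coeff D)) A)
        + (2 * Real.pi) • extd 2 (wedge 1 1 (extd 0 ((fun n _ => N n) : Coeff D)) A) := by
  let Λ : Coeff D := (fun n _ => lam n : Coeff D) + (2 * Real.pi) • (fun n _ => N n : Coeff D)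
  have hΛ (n : Site D) : DependsOn (Λ n) (Set.Iio 0) :=
    (dependsOn_const (lam n + 2 * Real.pi * N n)).mono (Set.empty_subset _)
  simpa only [Λ, extd_add, extd_smul, add_wedge, smul_wedge, ← sub_sub, pow_zero, one_smul,
    zero_add, Nat.reduceAdd] using chern_simons_gauge_variation_general A hΛ
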